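/- Suppose the memory-channel model with unitary U on H_M ⊗ H_S and initial memory state ξ_1 induces the same channel E on each of n successive uses with constant input state ρ. Then n(S(ρ) − S(E(ρ))) ≤ S(ξ_{n+1}) − S(ξ_1) ≤ log dim H_M, where ξ_{k+1} = Tr_S[U(ξ_k⊗ρ)U†]. -/

import Mathlib

open Matrix Kronecker BigOperators
open scoped ComplexOrder

noncomputable def vnEntropy {n : Type*} [Fintype n] [DecidableEq n] (ρ : Matrix n n ℂ) : ℝ :=
  if h : ρ.IsHermitian then ∑ i, Real.negMulLog (h.eigenvalues i) else 0

def IsDensity {n : Type*} [Fintype n] [DecidableEq n] (ρ : Matrix n n ℂ) : Prop :=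
  ρ.PosSemidef ∧ ρ.trace = 1

def IsUnitary {n : Type*} [Fintype n] [DecidableEq n] (U : Matrix n n ℂ) : Prop :=
  U * Uᴴ = 1 ∧ Uᴴ * U = 1

noncomputable def ptraceMem {μ s : Type*} [Fintype μ] (X : Matrix (μ × s) (μ × s) ℂ) : Matrix s s ℂ :=
  Matrix.of fun i j => ∑ a, X (a, i) (a, j)

noncomputable def ptraceSys {μ s : Type*} [Fintype s] (X : Matrix (μ × s) (μ × s) ℂ) : Matrix μ μ ℂ :=
  Matrix.of fun a b => ∑ i, X (a, i) (b, i)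

noncomputable def inducedChan {μ s : Type*} [Fintype μ] [Fintype s]
    (U : Matrix (μ × s) (μ × s) ℂ) (ξ : Matrix μ μ ℂ) (ρ : Matrix s s ℂ) : Matrix s s ℂ :=
  ptraceMem (U * (ξ ⊗ₖ ρ) * Uᴴ)

noncomputable def memUpdate {μ s : Type*} [Fintype μ] [Fintype s]
    (U : Matrix (μ × s) (μ × s) ℂ) (ξ : Matrix μ μ ℂ) (ρ : Matrix s s ℂ) : Matrix μ μ ℂ :=
  ptraceSys (U * (ξ ⊗ₖ ρ) * Uᴴ)

def ctrlU {μ s : Type*} [DecidableEq μ] (Uf : μ → Matrix s s ℂ) : Matrix (μ × s) (μ × s) ℂ :=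
  Matrix.of fun p q => if p.1 = q.1 then Uf p.1 p.2 q.2 else 0

def extendMap {n m : Type*} [Fintype n] [DecidableEq n]
    (E : Matrix n n ℂ →ₗ[ℂ] Matrix n n ℂ) (ρ : Matrix (n × m) (n × m) ℂ) :
    Matrix (n × m) (n × m) ℂ :=
  Matrix.of fun p q => E (Matrix.of fun i j => ρ (i, p.2) (j, q.2)) p.1 q.1

def IsCP {n : Type*} [Fintype n] [DecidableEq n]
    (E : Matrix n n ℂ →ₗ[ℂ] Matrix n n ℂ) : Prop :=
  ∀ (k : ℕ) (ρ : Matrix (n × Fin k) (n × Fin k) ℂ), ρ.PosSemidef → (extendMap E ρ).PosSemidef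

def IsTP {n : Type*} [Fintype n] [DecidableEq n]
    (E : Matrix n n ℂ →ₗ[ℂ] Matrix n n ℂ) : Prop :=
  ∀ ρ, (E ρ).trace = ρ.trace

noncomputable def mlog {n : Type*} [Fintype n] [DecidableEq n] (ρ : Matrix n n ℂ) :
    Matrix n n ℂ :=
  if h : ρ.IsHermitian then
    (h.eigenvectorUnitary : Matrix n n ℂ) *
      Matrix.diagonal (fun i => (Real.log (h.eigenvalues i) : ℂ)) *
      (h.eigenvectorUnitary : Matrix n n ℂ)ᴴ
  else 0

noncomputable def relEntropy {n : Type*} [Fintype n] [DecidableEq n]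
    (ρ ω : Matrix n n ℂ) : ℝ :=
  ((ρ * (mlog ρ - mlog ω)).trace).re


lemma aux_neg {d x : ℝ} (hd : 0 ≤ d) (hx : 0 ≤ x) (h : x = 0 → d = 0) :
    Real.negMulLog d ≤ -(d * Real.log x) + (x - d) := by
  rcases hd.eq_or_lt with rfl | hd
  · simpa using hx
  have hx' : 0 < x := lt_of_le_of_ne hx (fun e => hd.ne' (h e.symm))
  have h1 := Real.log_le_sub_one_of_pos (div_pos hx' hd)
  rw [Real.log_div hx'.ne' hd.ne'] at h1
  have h2 := mul_le_mul_of_nonneg_left h1 hd.le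
  have h3 : d * (x / d - 1) = x - d := by field_simp
  rw [h3] at h2
  unfold Real.negMulLog
  linarith

lemma aux_classical {μ s : Type*} [Fintype μ] [Fintype s] (d : μ × s → ℝ) (p : μ → ℝ) (q : s → ℝ)
    (hd : ∀ x, 0 ≤ d x) (hp : ∀ a, ∑ i, d (a, i) = p a) (hq : ∀ i, ∑ a, d (a, i) = q i)
    (hp1 : ∑ a, p a = 1) (hq1 : ∑ i, q i = 1) :
    ∑ x, Real.negMulLog (d x) ≤ ∑ a, Real.negMulLog (p a) + ∑ i, Real.negMulLog (q i) := by
  have hdp : ∀ a i, d (a, i) ≤ p a := fun a i => by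
    rw [← hp a]
    exact Finset.single_le_sum (f := fun i => d (a, i)) (fun i _ => hd _) (Finset.mem_univ i)
  have hdq : ∀ a i, d (a, i) ≤ q i := fun a i => by
    rw [← hq i]
    exact Finset.single_le_sum (f := fun a => d (a, i)) (fun i _ => hd _) (Finset.mem_univ a)
  have key : ∀ a i, Real.negMulLog (d (a, i)) ≤
      -(d (a, i) * Real.log (p a)) - d (a, i) * Real.log (q i) + (p a * q i - d (a, i)) := by
    intro a i
    have h0 := hd (a, i)
    have h1 := hdp a i
    have h2 := hdq a i
    have hz : p a * q i = 0 → d (a, i) = 0 := by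
      intro h
      rcases mul_eq_zero.1 h with h | h <;> linarith
    have := aux_neg h0 (mul_nonneg (h0.trans h1) (h0.trans h2)) hz
    by_cases hpq : p a * q i = 0
    · rw [hz hpq, hpq]; simp
    · have hne := mul_ne_zero_iff.1 hpq
      rw [Real.log_mul hne.1 hne.2] at this
      linarith
  rw [Fintype.sum_prod_type]
  refine (Finset.sum_le_sum fun a _ => Finset.sum_le_sum fun i _ => key a i).trans (le_of_eq ?_)
  have e1 : ∑ a, ∑ i, d (a, i) * Real.log (p a) = ∑ a, p a * Real.log (p a) := by
    simp_rw [← Finset.sum_mul, hp]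
  have e2 : ∑ a, ∑ i, d (a, i) * Real.log (q i) = ∑ i, q i * Real.log (q i) := by
    rw [Finset.sum_comm]; simp_rw [← Finset.sum_mul, hq]
  have e3 : ∑ a, ∑ i, p a * q i = 1 := by
    simp_rw [← Finset.mul_sum, hq1, mul_one, hp1]
  have e4 : ∑ a, ∑ i, d (a, i) = 1 := by simp_rw [hp, hp1]
  simp only [Finset.sum_add_distrib, Finset.sum_sub_distrib, Finset.sum_neg_distrib, e1, e2, e3, e4,
    Real.negMulLog, neg_mul]
  ring

lemma aux_unitary {n : Type*} [Fintype n] [DecidableEq n] (T : Matrix n n ℂ) (h : T * Tᴴ = 1) (i : n) :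
    ∑ j, Complex.normSq (T i j) = 1 := by
  have := congrFun (congrFun h i) i
  simp only [mul_apply, conjTranspose_apply, one_apply_eq] at this
  have h2 := congrArg Complex.re this
  simpa [Complex.mul_conj, ← Complex.ofReal_sum] using h2

lemma aux_diag {n : Type*} [Fintype n] [DecidableEq n] (T : Matrix n n ℂ) (l : n → ℝ) (i : n) :
    (T * diagonal (fun j => (l j : ℂ)) * Tᴴ) i i = ((∑ j, Complex.normSq (T i j) * l j : ℝ) : ℂ) := by
  rw [mul_apply]
  push_cast
  refine Finset.sum_congr rfl fun j _ => ?_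
  rw [mul_diagonal, conjTranspose_apply, ← Complex.mul_conj]
  simp; ring

lemma aux_jensen {n : Type*} [Fintype n] [DecidableEq n] (T : Matrix n n ℂ) (h : T * Tᴴ = 1)
    (h' : Tᴴ * T = 1) (l : n → ℝ) (hl : ∀ i, 0 ≤ l i) :
    ∑ i, Real.negMulLog (l i) ≤ ∑ i, Real.negMulLog (∑ j, Complex.normSq (T i j) * l j) := by
  have : ∀ i, ∑ j, Complex.normSq (T i j) * Real.negMulLog (l j) ≤
      Real.negMulLog (∑ j, Complex.normSq (T i j) * l j) := fun i =>
    Real.concaveOn_negMulLog.le_map_sum (t := Finset.univ) (w := fun j => Complex.normSq (T i j))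
      (p := l) (fun _ _ => Complex.normSq_nonneg _) (aux_unitary T h i) (fun j _ => hl j)
  refine le_trans (le_of_eq ?_) (Finset.sum_le_sum fun i _ => this i)
  rw [Finset.sum_comm]
  refine Finset.sum_congr rfl fun j _ => ?_
  rw [← Finset.sum_mul]
  have := aux_unitary Tᴴ (by simpa using h') j
  simp only [conjTranspose_apply, Complex.star_def, Complex.normSq_conj] at this
  rw [this, one_mul]

lemma aux_pt1 {μ s : Type*} [Fintype μ] [DecidableEq μ] [Fintype s] [DecidableEq s]
    (X : Matrix (μ × s) (μ × s) ℂ) (V : Matrix μ μ ℂ) :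
    ptraceSys ((V ⊗ₖ (1 : Matrix s s ℂ))ᴴ * X * (V ⊗ₖ (1 : Matrix s s ℂ))) = Vᴴ * ptraceSys X * V := by
  ext a b
  simp only [ptraceSys, of_apply, mul_apply, conjTranspose_apply, kroneckerMap_apply,
    Fintype.sum_prod_type, one_apply]
  simp [Finset.mul_sum, Finset.sum_mul, apply_ite]
  rw [Finset.sum_comm]
  refine Finset.sum_congr rfl fun j _ => ?_
  rw [Finset.sum_comm]

lemma aux_pt2 {μ s : Type*} [Fintype μ] [DecidableEq μ] [Fintype s] [DecidableEq s]
    (X : Matrix (μ × s) (μ × s) ℂ) (W : Matrix s s ℂ) (hW : W * Wᴴ = 1) :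
    ptraceSys (((1 : Matrix μ μ ℂ) ⊗ₖ W)ᴴ * X * ((1 : Matrix μ μ ℂ) ⊗ₖ W)) = ptraceSys X := by
  ext a b
  have : ∀ Y : Matrix (μ × s) (μ × s) ℂ, ptraceSys Y a b =
    (Y.submatrix (fun i => (a, i)) (fun i => (b, i))).trace := fun Y => rfl
  rw [this, this]
  have h2 : (((1 : Matrix μ μ ℂ) ⊗ₖ W)ᴴ * X * ((1 : Matrix μ μ ℂ) ⊗ₖ W)).submatrix
      (fun i => (a, i)) (fun i => (b, i)) =
      Wᴴ * X.submatrix (fun i => (a, i)) (fun i => (b, i)) * W := by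
    ext i j
    simp only [mul_apply, conjTranspose_apply, kroneckerMap_apply,
      Fintype.sum_prod_type, one_apply, submatrix_apply]
    simp [apply_ite]
  rw [h2, trace_mul_comm, ← mul_assoc, hW, one_mul]

lemma aux_pt {μ s : Type*} [Fintype μ] [DecidableEq μ] [Fintype s] [DecidableEq s]
    (X : Matrix (μ × s) (μ × s) ℂ) (V : Matrix μ μ ℂ) (W : Matrix s s ℂ) (hW : W * Wᴴ = 1) :
    ptraceSys ((V ⊗ₖ W)ᴴ * X * (V ⊗ₖ W)) = Vᴴ * ptraceSys X * V := by
  have : V ⊗ₖ W = ((1 : Matrix μ μ ℂ) ⊗ₖ W) * (V ⊗ₖ (1 : Matrix s s ℂ)) := by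
    rw [← mul_kronecker_mul]; simp
  rw [← aux_pt2 X W hW, ← aux_pt1, this, conjTranspose_mul]
  simp only [mul_assoc]

lemma aux_ptM {μ s : Type*} [Fintype μ] [DecidableEq μ] [Fintype s] [DecidableEq s]
    (X : Matrix (μ × s) (μ × s) ℂ) (V : Matrix μ μ ℂ) (W : Matrix s s ℂ) (hV : V * Vᴴ = 1) :
    ptraceMem ((V ⊗ₖ W)ᴴ * X * (V ⊗ₖ W)) = Wᴴ * ptraceMem X * W := by
  have h : ∀ Y : Matrix (μ × s) (μ × s) ℂ, ptraceMem Y =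
    ptraceSys (Y.submatrix (Equiv.prodComm s μ) (Equiv.prodComm s μ)) := fun Y => rfl
  rw [h, h, ← aux_pt _ W V hV]
  congr 1
  have e : W ⊗ₖ V = (V ⊗ₖ W).submatrix (Equiv.prodComm s μ) (Equiv.prodComm s μ) := by
    ext i j; simp [mul_comm]
  rw [e, conjTranspose_submatrix, submatrix_mul_equiv, submatrix_mul_equiv]

lemma aux_psd {μ s : Type*} [Fintype μ] [DecidableEq μ] [Fintype s] [DecidableEq s]
    (X : Matrix (μ × s) (μ × s) ℂ) (h : X.PosSemidef) : (ptraceSys X).PosSemidef := by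
  have : ptraceSys X = ∑ i, X.submatrix (fun a => (a, i)) (fun a => (a, i)) := by
    ext a b; simp [ptraceSys, Matrix.sum_apply]
  rw [this]
  exact posSemidef_sum _ fun i _ => h.submatrix _

lemma aux_density {μ s : Type*} [Fintype μ] [DecidableEq μ] [Fintype s] [DecidableEq s]
    (X : Matrix (μ × s) (μ × s) ℂ) (h : IsDensity X) : IsDensity (ptraceSys X) := by
  refine ⟨aux_psd X h.1, ?_⟩
  rw [← h.2]
  simp [trace, ptraceSys, Fintype.sum_prod_type]

lemma aux_densityM {μ s : Type*} [Fintype μ] [DecidableEq μ] [Fintype s] [DecidableEq s]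
    (X : Matrix (μ × s) (μ × s) ℂ) (h : IsDensity X) : IsDensity (ptraceMem X) := by
  have e : ptraceMem X =
    ptraceSys (X.submatrix (Equiv.prodComm s μ) (Equiv.prodComm s μ)) := rfl
  rw [e]
  refine aux_density _ ⟨h.1.submatrix _, ?_⟩
  rw [← h.2]
  exact Equiv.sum_comp (Equiv.prodComm s μ) (fun i => X i i)

lemma aux_joint {μ s : Type*} [Fintype μ] [DecidableEq μ] [Fintype s] [DecidableEq s]
    (U : Matrix (μ × s) (μ × s) ℂ) (hU : IsUnitary U) (ξ : Matrix μ μ ℂ) (ρ : Matrix s s ℂ)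
    (hξ : IsDensity ξ) (hρ : IsDensity ρ) : IsDensity (U * (ξ ⊗ₖ ρ) * Uᴴ) := by
  refine ⟨(hξ.1.kronecker hρ.1).mul_mul_conjTranspose_same U, ?_⟩
  rw [trace_mul_comm, ← mul_assoc, hU.2, one_mul, trace_kronecker, hξ.2, hρ.2, one_mul]

lemma aux_spec {n : Type*} [Fintype n] [DecidableEq n] (A : Matrix n n ℂ) (hA : IsDensity A) :
    ∃ (V : Matrix n n ℂ) (p : n → ℝ), V * Vᴴ = 1 ∧ Vᴴ * V = 1 ∧ (∀ i, 0 ≤ p i) ∧ ∑ i, p i = 1 ∧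
      A = V * diagonal (fun i => (p i : ℂ)) * Vᴴ ∧ vnEntropy A = ∑ i, Real.negMulLog (p i) := by
  have hH := hA.1.isHermitian
  refine ⟨hH.eigenvectorUnitary, hH.eigenvalues, ?_, ?_, hA.1.eigenvalues_nonneg, ?_, ?_, ?_⟩
  · exact Unitary.coe_mul_star_self _
  · exact Unitary.coe_star_mul_self _
  · have := hH.trace_eq_sum_eigenvalues
    rw [hA.2] at this
    have h2 := congrArg Complex.re this.symm
    simpa using h2
  · conv_lhs => rw [hH.spectral_theorem]
    rw [Unitary.conjStarAlgAut_apply]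
    rfl
  · simp [vnEntropy, hH]

lemma aux_step {μ s : Type*} [Fintype μ] [DecidableEq μ] [Fintype s] [DecidableEq s]
    (U : Matrix (μ × s) (μ × s) ℂ) (hU : IsUnitary U) (ξ : Matrix μ μ ℂ) (ρ : Matrix s s ℂ)
    (hξ : IsDensity ξ) (hρ : IsDensity ρ) :
    vnEntropy ξ + vnEntropy ρ ≤ vnEntropy (memUpdate U ξ ρ) + vnEntropy (inducedChan U ξ ρ) := by
  have hX := aux_joint U hU ξ ρ hξ hρ
  obtain ⟨V, p, hV, hV', hp, hp1, eξ, sξ⟩ := aux_spec ξ hξ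
  obtain ⟨W, q, hW, hW', hq, hq1, eρ, sρ⟩ := aux_spec ρ hρ
  obtain ⟨V2, p2, hV2, hV2', hp2, hp21, eξ2, sξ2⟩ := aux_spec (memUpdate U ξ ρ) (aux_density _ hX)
  obtain ⟨W2, q2, hW2, hW2', hq2, hq21, eρ2, sρ2⟩ := aux_spec (inducedChan U ξ ρ) (aux_densityM _ hX)
  rw [sξ, sρ, sξ2, sρ2]
  set l : μ × s → ℝ := fun x => p x.1 * q x.2 with hl
  set T : Matrix (μ × s) (μ × s) ℂ := (V2 ⊗ₖ W2)ᴴ * U * (V ⊗ₖ W) with hT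
  have hk : ∀ {A : Matrix μ μ ℂ} {B : Matrix s s ℂ}, A * Aᴴ = 1 → B * Bᴴ = 1 →
      (A ⊗ₖ B) * (A ⊗ₖ B)ᴴ = 1 := by
    intro A B h1 h2
    rw [conjTranspose_kronecker, ← mul_kronecker_mul, h1, h2, one_kronecker_one]
  have hVW := hk hV hW
  have hVW2 := mul_eq_one_comm.1 (hk hV2 hW2)
  have hTT : T * Tᴴ = 1 := by
    calc T * Tᴴ = (V2 ⊗ₖ W2)ᴴ * (U * ((V ⊗ₖ W) * (V ⊗ₖ W)ᴴ) * Uᴴ) * (V2 ⊗ₖ W2) := by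
          simp only [hT, conjTranspose_mul, conjTranspose_conjTranspose, mul_assoc]
      _ = 1 := by rw [hVW, mul_one, hU.1, mul_one, hVW2]
  have hkr : ξ ⊗ₖ ρ = (V ⊗ₖ W) * diagonal (fun x => (l x : ℂ)) * (V ⊗ₖ W)ᴴ := by
    have : diagonal (fun x => (l x : ℂ)) =
        diagonal (fun i => (p i : ℂ)) ⊗ₖ diagonal (fun i => (q i : ℂ)) := by
      rw [diagonal_kronecker_diagonal]; simp [hl]
    rw [this, conjTranspose_kronecker, ← mul_kronecker_mul, ← mul_kronecker_mul, ← eξ, ← eρ]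
  have hD : T * diagonal (fun x => (l x : ℂ)) * Tᴴ =
      (V2 ⊗ₖ W2)ᴴ * (U * (ξ ⊗ₖ ρ) * Uᴴ) * (V2 ⊗ₖ W2) := by
    simp only [hkr, hT, conjTranspose_mul, conjTranspose_conjTranspose, mul_assoc]
  have hl0 : ∀ x, 0 ≤ l x := fun x => mul_nonneg (hp _) (hq _)
  have hcl : ∑ a, Real.negMulLog (p a) + ∑ i, Real.negMulLog (q i) = ∑ x, Real.negMulLog (l x) := by
    simp only [hl, Fintype.sum_prod_type, Real.negMulLog_mul, Finset.sum_add_distrib]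
    simp only [← Finset.sum_mul, ← Finset.mul_sum, hp1, hq1, one_mul]
  rw [hcl]
  refine (aux_jensen T hTT (mul_eq_one_comm.1 hTT) l hl0).trans ?_
  refine aux_classical (fun x => ∑ j, Complex.normSq (T x j) * l j) p2 q2
    (fun x => Finset.sum_nonneg fun j _ => mul_nonneg (Complex.normSq_nonneg _) (hl0 j)) ?_ ?_ hp21 hq21
  · intro a
    have h1 := aux_pt (U * (ξ ⊗ₖ ρ) * Uᴴ) V2 W2 hW2
    rw [← hD] at h1
    have h2 : V2ᴴ * memUpdate U ξ ρ * V2 = diagonal (fun i => (p2 i : ℂ)) := by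
      rw [eξ2, mul_assoc, mul_assoc, hV2', mul_one, ← mul_assoc, hV2', one_mul]
    have h3 := congrFun (congrFun (h1.trans h2) a) a
    simp only [ptraceSys, of_apply, aux_diag, diagonal_apply_eq] at h3
    exact_mod_cast h3
  · intro a
    have h1 := aux_ptM (U * (ξ ⊗ₖ ρ) * Uᴴ) V2 W2 hV2
    rw [← hD] at h1
    have h2 : W2ᴴ * inducedChan U ξ ρ * W2 = diagonal (fun i => (q2 i : ℂ)) := by
      rw [eρ2, mul_assoc, mul_assoc, hW2', mul_one, ← mul_assoc, hW2', one_mul]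
    have h3 := congrFun (congrFun (h1.trans h2) a) a
    simp only [ptraceMem, of_apply, aux_diag, diagonal_apply_eq] at h3
    exact_mod_cast h3

lemma aux_nonneg {n : Type*} [Fintype n] [DecidableEq n] (A : Matrix n n ℂ) (hA : IsDensity A) :
    0 ≤ vnEntropy A := by
  obtain ⟨V, p, hV, hV', hp, hp1, e, h⟩ := aux_spec A hA
  rw [h]
  refine Finset.sum_nonneg fun i _ => Real.negMulLog_nonneg (hp i) ?_
  rw [← hp1]
  exact Finset.single_le_sum (fun i _ => hp i) (Finset.mem_univ i)

lemma aux_log {n : Type*} [Fintype n] [DecidableEq n] [Nonempty n] (A : Matrix n n ℂ)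
    (hA : IsDensity A) : vnEntropy A ≤ Real.log (Fintype.card n) := by
  obtain ⟨V, p, hV, hV', hp, hp1, e, h⟩ := aux_spec A hA
  rw [h]
  have hN : (0 : ℝ) < Fintype.card n := by exact_mod_cast Fintype.card_pos
  refine (Finset.sum_le_sum fun i _ => aux_neg (hp i) (inv_pos.2 hN).le
    (fun h => absurd h (inv_pos.2 hN).ne')).trans (le_of_eq ?_)
  simp only [Finset.sum_add_distrib, Finset.sum_sub_distrib, Finset.sum_neg_distrib,
    ← Finset.sum_mul, hp1, Real.log_inv, Finset.sum_const, Finset.card_univ, nsmul_eq_mul]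
  rw [mul_inv_cancel₀ hN.ne']; ring

theorem repeatable_entropy_bound
    {μ s : Type*} [Fintype μ] [DecidableEq μ] [Fintype s] [DecidableEq s] [Nonempty μ]
    (U : Matrix (μ × s) (μ × s) ℂ) (hU : IsUnitary U)
    (ρ : Matrix s s ℂ) (hρ : IsDensity ρ)
    (ξseq : ℕ → Matrix μ μ ℂ) (hξ0 : IsDensity (ξseq 0))
    (hrec : ∀ k, ξseq (k + 1) = memUpdate U (ξseq k) ρ)
    (n : ℕ) (Eρ : Matrix s s ℂ)
    (hrep : ∀ k < n, inducedChan U (ξseq k) ρ = Eρ) :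
    (n : ℝ) * (vnEntropy ρ - vnEntropy Eρ) ≤ vnEntropy (ξseq n) - vnEntropy (ξseq 0) ∧
    vnEntropy (ξseq n) - vnEntropy (ξseq 0) ≤ Real.log (Fintype.card μ) := by
  have hden : ∀ k, IsDensity (ξseq k) := by
    intro k
    induction k with
    | zero => exact hξ0
    | succ k ih => rw [hrec]; exact aux_density _ (aux_joint U hU _ _ ih hρ)
  constructor
  · have : ∀ k ≤ n, (k : ℝ) * (vnEntropy ρ - vnEntropy Eρ) ≤
        vnEntropy (ξseq k) - vnEntropy (ξseq 0) := by
      intro k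
      induction k with
      | zero => intro _; simp
      | succ k ih =>
        intro hk
        have h1 := ih (by omega)
        have h2 := aux_step U hU (ξseq k) ρ (hden k) hρ
        rw [hrep k (by omega), ← hrec] at h2
        push_cast
        linarith
    exact this n le_rfl
  · have h1 := aux_log _ (hden n)
    have h2 := aux_nonneg _ hξ0
    linarith
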